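/- Fix p > 1, q with 1/p + 1/q = 1, t > 0, and β ∈ [1/2, 1). Set y_0 = t(1−β)^{1/p}, y_1 = t(1−β)^{−1/q}, and x(y) = (β^{−1} − 1)^{1/q}(y_1 − y). Then for each y ∈ (0, y_0) there exists a unique ỹ ∈ (y_0, y_1) such that y^p + x(y)^p = ỹ^p + x(ỹ)^p. -/

import Mathlib

/-- The derivative of `z ↦ z ^ p + k ^ (p - 1) * (s - z) ^ p`. -/
lemma hasDerivAt_rpow_add_mul_sub_rpow {p : ℝ} (hp : 1 < p) (k s z : ℝ) :
    HasDerivAt (fun z : ℝ => z ^ p + k ^ (p - 1) * (s - z) ^ p)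
      (p * (z ^ (p - 1) - k ^ (p - 1) * (s - z) ^ (p - 1))) z := by
  have h₁ := Real.hasDerivAt_rpow_const (x := z) (p := p) (Or.inr hp.le)
  have h₂ := (((hasDerivAt_id z).const_sub s).rpow_const (p := p) (Or.inr hp.le)).const_mul
    (k ^ (p - 1))
  exact (h₁.add h₂).congr_deriv (by simp only [id_eq]; ring)

/-- `z ↦ z ^ p + k ^ (p - 1) * (s - z) ^ p` decreases strictly on `[0, m]`, where
`m = k * (s - m)`. -/
lemma strictAntiOn_rpow_add_mul_sub_rpow {p k s m : ℝ} (hp : 1 < p) (hk : 0 < k)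
    (hms : m ≤ s) (hm : m = k * (s - m)) :
    StrictAntiOn (fun z : ℝ => z ^ p + k ^ (p - 1) * (s - z) ^ p) (Set.Icc 0 m) := by
  refine strictAntiOn_of_deriv_neg (convex_Icc 0 m)
    (fun z _ => (hasDerivAt_rpow_add_mul_sub_rpow hp k s z).continuousAt.continuousWithinAt) ?_
  intro z hz
  rw [interior_Icc] at hz
  obtain ⟨hz₀, hzm⟩ := hz
  rw [(hasDerivAt_rpow_add_mul_sub_rpow hp k s z).deriv,
    ← Real.mul_rpow hk.le (by linarith)]
  have hlt : z < k * (s - z) := by nlinarith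
  have := Real.rpow_lt_rpow hz₀.le hlt (sub_pos.2 hp)
  nlinarith

/-- `z ↦ z ^ p + k ^ (p - 1) * (s - z) ^ p` increases strictly on `[m, s]`, where
`m = k * (s - m)`. -/
lemma strictMonoOn_rpow_add_mul_sub_rpow {p k s m : ℝ} (hp : 1 < p) (hk : 0 < k)
    (hm : m = k * (s - m)) :
    StrictMonoOn (fun z : ℝ => z ^ p + k ^ (p - 1) * (s - z) ^ p) (Set.Icc m s) := by
  refine strictMonoOn_of_deriv_pos (convex_Icc m s)
    (fun z _ => (hasDerivAt_rpow_add_mul_sub_rpow hp k s z).continuousAt.continuousWithinAt) ?_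
  intro z hz
  rw [interior_Icc] at hz
  obtain ⟨hmz, hzs⟩ := hz
  rw [(hasDerivAt_rpow_add_mul_sub_rpow hp k s z).deriv,
    ← Real.mul_rpow hk.le (by linarith)]
  have hlt : k * (s - z) < z := by nlinarith
  have := Real.rpow_lt_rpow (mul_nonneg hk.le (by linarith)) hlt (sub_pos.2 hp)
  nlinarith

theorem claim1_existence_uniqueness
    (p q t β : ℝ) (hp : 1 < p) (hpq : 1 / p + 1 / q = 1) (ht : 0 < t)
    (hβ : β ∈ Set.Ico (1 / 2 : ℝ) 1)
    (y₀ y₁ : ℝ) (hy₀ : y₀ = t * (1 - β) ^ (1 / p)) (hy₁ : y₁ = t * (1 - β) ^ (-(1 / q)))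
    (x : ℝ → ℝ) (hx : ∀ z, x z = (β⁻¹ - 1) ^ (1 / q) * (y₁ - z)) :
    ∀ y ∈ Set.Ioo (0 : ℝ) y₀,
      ∃! ty : ℝ, ty ∈ Set.Ioo y₀ y₁ ∧ y ^ p + x y ^ p = ty ^ p + x ty ^ p := by
  obtain ⟨hβ₁, hβ₂⟩ := hβ
  have hβ₀ : 0 < β := by linarith
  have hp₀ : 0 < p := by linarith
  have hβs : 0 < 1 - β := sub_pos.2 hβ₂
  set k := β⁻¹ - 1 with hkdef
  have hkβ : k * β = 1 - β := by rw [hkdef]; field_simp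
  have hk : 0 < k := by
    by_contra! h
    nlinarith
  have hk₁ : k ≤ 1 := by
    by_contra! h
    nlinarith
  have hy₁pos : 0 < y₁ := hy₁ ▸ mul_pos ht (Real.rpow_pos_of_pos hβs _)
  have hy₀₁ : y₀ = (1 - β) * y₁ := by
    rw [hy₀, hy₁, show 1 / p = 1 + -(1 / q) by linarith, Real.rpow_add hβs, Real.rpow_one]
    ring
  have hy₀le : y₀ < y₁ := by nlinarith
  have hcrit : y₀ = k * (y₁ - y₀) := by
    rw [hy₀₁]
    linear_combination -y₁ * hkβ
  have hxp : ∀ z ≤ y₁, x z ^ p = k ^ (p - 1) * (y₁ - z) ^ p := by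
    intro z hz
    rw [hx, Real.mul_rpow (Real.rpow_nonneg hk.le _) (by linarith), ← Real.rpow_mul hk.le,
      show 1 / q * p = p - 1 by
        rw [show 1 / q = 1 - 1 / p by linarith]
        field_simp]
  set f : ℝ → ℝ := fun z => z ^ p + k ^ (p - 1) * (y₁ - z) ^ p with hf
  have hfx : ∀ z ≤ y₁, z ^ p + x z ^ p = f z := fun z hz => by rw [hxp z hz]
  have hanti : StrictAntiOn f (Set.Icc 0 y₀) :=
    strictAntiOn_rpow_add_mul_sub_rpow hp hk hy₀le.le hcrit
  have hmono : StrictMonoOn f (Set.Icc y₀ y₁) :=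
    strictMonoOn_rpow_add_mul_sub_rpow hp hk hcrit
  have hcont : ContinuousOn f (Set.Icc y₀ y₁) := fun z _ =>
    (hasDerivAt_rpow_add_mul_sub_rpow hp k y₁ z).continuousAt.continuousWithinAt
  have hends : f 0 ≤ f y₁ := by
    simp only [hf, sub_zero, sub_self, Real.zero_rpow hp₀.ne', zero_add, mul_zero, add_zero]
    exact mul_le_of_le_one_left (Real.rpow_nonneg hy₁pos.le _)
      (Real.rpow_le_one hk.le hk₁ (by linarith))
  rintro y ⟨hy, hyy₀⟩
  have hlow : f y₀ < f y := hanti ⟨hy.le, hyy₀.le⟩ ⟨by linarith, le_rfl⟩ hyy₀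
  have hhigh : f y < f y₁ := (hanti ⟨le_rfl, by linarith⟩ ⟨hy.le, hyy₀.le⟩ hy).trans_le hends
  obtain ⟨w, hw, hfw⟩ := intermediate_value_Ioo hy₀le.le hcont ⟨hlow, hhigh⟩
  refine ⟨w, ⟨hw, ?_⟩, ?_⟩
  · rw [hfx y (by linarith), hfx w hw.2.le, hfw]
  · rintro v ⟨hv, hfv⟩
    rw [hfx y (by linarith), hfx v hv.2.le] at hfv
    exact hmono.injOn (Set.Ioo_subset_Icc_self hv) (Set.Ioo_subset_Icc_self hw)
      (hfv.symm.trans hfw.symm)
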